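/- Let c₁, c₂ ≥ 0, 0 < r < 1, and let k ≥ 1 be an integer. Let (D_t)_{t=1}^{k}, (S_t)_{t=1}^{k}, (s_t)_{t=1}^{k} be nonnegative real sequences with s_t > 0, and (V_t)_{t=0}^{k−1} a nonnegative real sequence, such that: D_t ≤ c₁·S_t + V_{t−1} for 1 ≤ t ≤ k; V_0 ≤ c₂·S_1; V_t ≤ c₂·S_{t+1} + (1−r)·V_{t−1} for 1 ≤ t ≤ k−1; and s_t·(1−r) ≤ s_{t−1}·(1 − r/2) for 2 ≤ t ≤ k. Then Σ_{t=1}^{k} s_t·D_t ≤ (c₁ + 2c₂/r)·Σ_{t=1}^{k} s_t·S_t. -/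

import Mathlib

open Finset

/-!
Put `a t = s (t + 1) * V t` and `p = 1 - r / 2`. The weight condition trades the factor `1 - r` of
the recursion for `p` when the weight moves back one step, so
`a (t + 1) ≤ c₂ * (s (t + 2) * S (t + 2)) + p * a t`. Summing over `t` and absorbing `p * ∑ a`
on the left leaves `(r / 2) * ∑ a`, which is where the constant `2 * c₂ / r` comes from.
-/

section WeightedRecursion

variable {R : Type*} [PartialOrder R]

theorem one_sub_mul_sum_range_le_of_le_add_mul [Ring R] [IsOrderedRing R] {a g : ℕ → R} {p : R}
    {n : ℕ} (hp : 0 ≤ p) (han : 0 ≤ a n) (h0 : a 0 ≤ g 0)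
    (hrec : ∀ t < n, a (t + 1) ≤ g (t + 1) + p * a t) :
    (1 - p) * ∑ t ∈ range (n + 1), a t ≤ ∑ t ∈ range (n + 1), g t := by
  rw [sub_mul, one_mul, sub_le_iff_le_add]
  calc ∑ t ∈ range (n + 1), a t
      = ∑ t ∈ range n, a (t + 1) + a 0 := sum_range_succ' a n
    _ ≤ ∑ t ∈ range n, (g (t + 1) + p * a t) + g 0 :=
        add_le_add (sum_le_sum fun t ht => hrec t (mem_range.mp ht)) h0
    _ = ∑ t ∈ range (n + 1), g t + p * ∑ t ∈ range n, a t := by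
        rw [sum_add_distrib, ← mul_sum, sum_range_succ' g, add_right_comm]
    _ ≤ ∑ t ∈ range (n + 1), g t + p * ∑ t ∈ range (n + 1), a t := by
        rw [sum_range_succ a]
        exact add_le_add_right (mul_le_mul_of_nonneg_left (le_add_of_nonneg_right han) hp) _

theorem one_sub_mul_sum_range_mul_le_of_le_add_mul [CommRing R] [IsOrderedRing R]
    {w V b : ℕ → R} {p q : R} {n : ℕ} (hp : 0 ≤ p) (hw : ∀ t ≤ n, 0 ≤ w t)
    (hV : ∀ t ≤ n, 0 ≤ V t) (h0 : V 0 ≤ b 0)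
    (hrec : ∀ t < n, V (t + 1) ≤ b (t + 1) + q * V t)
    (hwq : ∀ t < n, w (t + 1) * q ≤ w t * p) :
    (1 - p) * ∑ t ∈ range (n + 1), w t * V t ≤ ∑ t ∈ range (n + 1), w t * b t := by
  refine one_sub_mul_sum_range_le_of_le_add_mul hp (mul_nonneg (hw n le_rfl) (hV n le_rfl))
    (mul_le_mul_of_nonneg_left h0 (hw 0 n.zero_le)) fun t ht => ?_
  calc w (t + 1) * V (t + 1)
      ≤ w (t + 1) * (b (t + 1) + q * V t) := mul_le_mul_of_nonneg_left (hrec t ht) (hw _ ht)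
    _ = w (t + 1) * b (t + 1) + w (t + 1) * q * V t := by ring
    _ ≤ w (t + 1) * b (t + 1) + w t * p * V t :=
        add_le_add_right (mul_le_mul_of_nonneg_right (hwq t ht) (hV t ht.le)) _
    _ = w (t + 1) * b (t + 1) + p * (w t * V t) := by ring

end WeightedRecursion

theorem ggc_weighted_variance_bound_general {𝕜 : Type*} [Field 𝕜] [LinearOrder 𝕜]
    [IsStrictOrderedRing 𝕜] {c₁ c₂ r : 𝕜} (hr0 : 0 < r) (hr2 : r ≤ 2) {k : ℕ}
    {D S s V : ℕ → 𝕜}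
    (hs : ∀ t, 1 ≤ t → t ≤ k → 0 ≤ s t)
    (hV : ∀ t, t ≤ k - 1 → 0 ≤ V t)
    (hDS : ∀ t, 1 ≤ t → t ≤ k → D t ≤ c₁ * S t + V (t - 1))
    (hV0 : V 0 ≤ c₂ * S 1)
    (hVrec : ∀ t, 1 ≤ t → t ≤ k - 1 → V t ≤ c₂ * S (t + 1) + (1 - r) * V (t - 1))
    (hsdec : ∀ t, 2 ≤ t → t ≤ k → s t * (1 - r) ≤ s (t - 1) * (1 - r / 2)) :
    ∑ t ∈ Icc 1 k, s t * D t ≤ (c₁ + 2 * c₂ / r) * ∑ t ∈ Icc 1 k, s t * S t := by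
  obtain _ | n := k
  · simp
  have sum_shift (f : ℕ → 𝕜) : ∑ t ∈ Icc 1 (n + 1), f t = ∑ t ∈ range (n + 1), f (t + 1) := by
    rw [range_eq_Ico, sum_Ico_add' f 0 (n + 1) 1, zero_add, Ico_add_one_right_eq_Icc]
  have sum_V : r / 2 * ∑ t ∈ range (n + 1), s (t + 1) * V t
      ≤ c₂ * ∑ t ∈ range (n + 1), s (t + 1) * S (t + 1) := by
    have h := one_sub_mul_sum_range_mul_le_of_le_add_mul (n := n)
      (w := fun t => s (t + 1)) (b := fun t => c₂ * S (t + 1)) (by linarith : 0 ≤ 1 - r / 2)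
      (fun t ht => hs (t + 1) (by omega) (by omega)) hV hV0
      (fun t ht => hVrec (t + 1) (by omega) ht)
      (fun t ht => hsdec (t + 2) (by omega) (by omega))
    simpa only [sub_sub_cancel, mul_left_comm _ c₂, ← mul_sum] using h
  rw [sum_shift, sum_shift]
  calc ∑ t ∈ range (n + 1), s (t + 1) * D (t + 1)
      ≤ ∑ t ∈ range (n + 1), s (t + 1) * (c₁ * S (t + 1) + V t) :=
        sum_le_sum fun t ht =>
          have ht' : t + 1 ≤ n + 1 := mem_range.mp ht
          mul_le_mul_of_nonneg_left (hDS _ (by omega) ht') (hs _ (by omega) ht')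
    _ = c₁ * ∑ t ∈ range (n + 1), s (t + 1) * S (t + 1)
          + 2 / r * (r / 2 * ∑ t ∈ range (n + 1), s (t + 1) * V t) := by
        simp only [mul_add, sum_add_distrib, mul_left_comm _ c₁, ← mul_sum]
        field_simp
    _ ≤ c₁ * ∑ t ∈ range (n + 1), s (t + 1) * S (t + 1)
          + 2 / r * (c₂ * ∑ t ∈ range (n + 1), s (t + 1) * S (t + 1)) := by gcongr
    _ = (c₁ + 2 * c₂ / r) * ∑ t ∈ range (n + 1), s (t + 1) * S (t + 1) := by ring

/-- **Variance bound under the general growth condition.**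
If `D_t ≤ c₁ S_t + V_{t-1}`, `V_0 ≤ c₂ S_1`, `V_t ≤ c₂ S_{t+1} + (1-r) V_{t-1}`,
and the positive weights satisfy `s_t (1-r) ≤ s_{t-1} (1 - r/2)`, then
`Σ_{t=1}^k s_t D_t ≤ (c₁ + 2c₂/r) Σ_{t=1}^k s_t S_t`. -/
theorem ggc_weighted_variance_bound
    (c₁ c₂ r : ℝ) (hc₁ : 0 ≤ c₁) (hc₂ : 0 ≤ c₂) (hr0 : 0 < r) (hr1 : r < 1)
    (k : ℕ) (hk : 1 ≤ k)
    (D S s V : ℕ → ℝ)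
    (hD0 : ∀ t, 1 ≤ t → t ≤ k → 0 ≤ D t)
    (hS0 : ∀ t, 1 ≤ t → t ≤ k → 0 ≤ S t)
    (hs0 : ∀ t, 1 ≤ t → t ≤ k → 0 < s t)
    (hV0' : ∀ t, t ≤ k - 1 → 0 ≤ V t)
    (hDS : ∀ t, 1 ≤ t → t ≤ k → D t ≤ c₁ * S t + V (t - 1))
    (hV0 : V 0 ≤ c₂ * S 1)
    (hVrec : ∀ t, 1 ≤ t → t ≤ k - 1 → V t ≤ c₂ * S (t + 1) + (1 - r) * V (t - 1))
    (hsdec : ∀ t, 2 ≤ t → t ≤ k → s t * (1 - r) ≤ s (t - 1) * (1 - r / 2)) :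
    ∑ t ∈ Icc 1 k, s t * D t ≤ (c₁ + 2 * c₂ / r) * ∑ t ∈ Icc 1 k, s t * S t :=
  ggc_weighted_variance_bound_general hr0 (hr1.le.trans one_le_two)
    (fun t h1 hk => (hs0 t h1 hk).le) hV0' hDS hV0 hVrec hsdec
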